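/- If H is a conductor submonoid of a factorial monoid F and H is not half-factorial, then the adjacent catenary degree of H equals 3. -/

import Mathlib

def IsPrimeElem {F : Type*} [CancelCommMonoid F] (p : F) : Prop :=
  ¬ IsUnit p ∧ ∀ a b : F, p ∣ a * b → p ∣ a ∨ p ∣ b

def IsFactorialMonoid (F : Type*) [CancelCommMonoid F] : Prop :=
  ∀ a : F, ∃ (u : F) (l : Multiset F), IsUnit u ∧ (∀ p ∈ l, IsPrimeElem p) ∧ a = u * l.prod

/-- `a` is an invertible element of the submonoid `H`, i.e. `a ∈ H^×`. -/
def IsUnitIn {F : Type*} [CancelCommMonoid F] (H : Submonoid F) (a : F) : Prop :=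
  a ∈ H ∧ ∃ b ∈ H, a * b = 1

/-- `H` is a conductor submonoid of `F`: `H ≠ H^×` and `H \ H^×` is an s-ideal of `F`. -/
def IsConductorSubmonoid {F : Type*} [CancelCommMonoid F] (H : Submonoid F) : Prop :=
  (∃ a ∈ H, ¬ IsUnitIn H a) ∧
  ∀ a ∈ H, ¬ IsUnitIn H a → ∀ y : F, a * y ∈ H ∧ ¬ IsUnitIn H (a * y)

/-- `a` is an atom of the submonoid `H`. -/
def IsAtomIn {F : Type*} [CancelCommMonoid F] (H : Submonoid F) (a : F) : Prop :=
  a ∈ H ∧ ¬ IsUnitIn H a ∧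
    ∀ b c : F, b ∈ H → c ∈ H → a = b * c → IsUnitIn H b ∨ IsUnitIn H c


/-- The set of factorizations of `a` into atoms of `H` (as multisets of atoms). -/
def FactorizationsOf {F : Type*} [CancelCommMonoid F] (H : Submonoid F) (a : F) :
    Set (Multiset F) :=
  {l | (∀ u ∈ l, IsAtomIn H u) ∧ l.prod = a}

/-- The distance between two factorizations: cancel the common part and take the maximum
of the remaining lengths. -/
def factDist {F : Type*} [CancelCommMonoid F] [DecidableEq F]
    (z z' : Multiset F) : ℕ :=
  max (Multiset.card (z - z')) (Multiset.card (z' - z))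

/-- The set of lengths of `a`. -/
def LengthSetOf {F : Type*} [CancelCommMonoid F] (H : Submonoid F) (a : F) : Set ℕ :=
  {n | ∃ l ∈ FactorizationsOf H a, Multiset.card l = n}

section CondHelpers

variable {F : Type*} [CancelCommMonoid F]

/-- `a` is a unit times a product of `n` primes. -/
def CNum (a : F) (n : ℕ) : Prop :=
  ∃ (u : F) (l : Multiset F), IsUnit u ∧ (∀ p ∈ l, IsPrimeElem p) ∧ a = u * l.prod ∧
    Multiset.card l = n

/-- divides a product only if it divides a factor -/
def QP (p : F) : Prop := ∀ a b : F, p ∣ a * b → p ∣ a ∨ p ∣ b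

/-- nonunit of `H` -/
def NI (H : Submonoid F) (a : F) : Prop := a ∈ H ∧ ¬ IsUnitIn H a

lemma cnum_exists (hF : IsFactorialMonoid F) (a : F) : ∃ n, CNum a n := by
  obtain ⟨u, l, hu, hl, h⟩ := hF a
  exact ⟨_, u, l, hu, hl, h, rfl⟩

lemma cnum_zero {a : F} (h : CNum a 0) : IsUnit a := by
  obtain ⟨u, l, hu, hl, h, hc⟩ := h
  rw [Multiset.card_eq_zero] at hc
  subst hc; simpa [h] using hu

lemma cnum_succ {a : F} {n : ℕ} (h : CNum a (n+1)) :
    ∃ p b, QP p ∧ a = p * b ∧ CNum b n := by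
  obtain ⟨u, l, hu, hl, h, hc⟩ := h
  obtain ⟨p, t, rfl⟩ := Multiset.card_pos_iff_exists_mem.1 (by omega : 0 < Multiset.card l)
    |>.imp fun p hp => Multiset.exists_cons_of_mem hp
  refine ⟨p, u * t.prod, (hl p (by simp)).2, ?_, u, t, hu, fun q hq => hl q (by simp [hq]), rfl,
    by simpa using hc⟩
  rw [h, Multiset.prod_cons, mul_left_comm]

lemma cnum_mul : ∀ (l : Multiset F) (u x y : F), IsUnit u → (∀ p ∈ l, IsPrimeElem p) →
    x * y = u * l.prod → ∃ m k, CNum x m ∧ CNum y k ∧ m + k = Multiset.card l := by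
  intro l
  induction l using Multiset.induction_on with
  | empty =>
    intro u x y hu _ h
    have h2 : IsUnit (x * y) := by simpa [h] using hu
    have := isUnit_of_mul_isUnit_left h2
    have h3 := isUnit_of_mul_isUnit_right h2
    exact ⟨0, 0, ⟨x, 0, this, by simp, by simp, rfl⟩, ⟨y, 0, h3, by simp, by simp, rfl⟩, rfl⟩
  | cons p l ih =>
    intro u x y hu hl h
    have hp := hl p (by simp)
    have hl' : ∀ p ∈ l, IsPrimeElem p := fun q hq => hl q (by simp [hq])
    have aux : ∀ (x : F) m, CNum x m → CNum (p * x) (m+1) := by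
      rintro x m ⟨v, t, hv, ht, e, hc⟩
      refine ⟨v, p ::ₘ t, hv, ?_, ?_, by simp [hc]⟩
      · intro q hq
        rcases Multiset.mem_cons.1 hq with rfl | hq
        · exact hp
        · exact ht q hq
      · rw [e, Multiset.prod_cons, mul_left_comm]
    rw [Multiset.prod_cons] at h
    have hd : p ∣ x * y := ⟨u * l.prod, by rw [h, mul_left_comm]⟩
    rcases hp.2 x y hd with ⟨x', rfl⟩ | ⟨y', rfl⟩
    · have : x' * y = u * l.prod := by
        apply mul_left_cancel (a := p)
        rw [← mul_assoc, h, mul_left_comm]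
      obtain ⟨m, k, h1, h2, h3⟩ := ih u x' y hu hl' this
      exact ⟨m+1, k, aux _ _ h1, h2, by simp; omega⟩
    · have : x * y' = u * l.prod := by
        apply mul_left_cancel (a := p)
        rw [mul_left_comm, h, mul_left_comm]
      obtain ⟨m, k, h1, h2, h3⟩ := ih u x y' hu hl' this
      exact ⟨m, k+1, h1, aux _ _ h2, by simp; omega⟩

lemma cnum_split {a x y : F} {n : ℕ} (h : CNum a n) (e : a = x * y)
    (hx : ¬ IsUnit x) (hy : ¬ IsUnit y) : (∃ m < n, CNum x m) ∧ (∃ m < n, CNum y m) := by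
  obtain ⟨u, l, hu, hl, h, hc⟩ := h
  obtain ⟨m, k, h1, h2, h3⟩ := cnum_mul l u x y hu hl (by rw [← e, h])
  have : m ≠ 0 := by rintro rfl; exact hx (cnum_zero h1)
  have : k ≠ 0 := by rintro rfl; exact hy (cnum_zero h2)
  exact ⟨⟨m, by omega, h1⟩, ⟨k, by omega, h2⟩⟩

lemma qp_unit {u : F} (hu : IsUnit u) : QP u := fun _ _ _ => Or.inl hu.dvd

lemma prime_ind (hF : IsFactorialMonoid F) {P : F → Prop} (h0 : ∀ u, IsUnit u → P u)
    (h1 : ∀ p x, QP p → P x → P (p * x)) (a : F) : P a := by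
  obtain ⟨n, hn⟩ := cnum_exists hF a
  induction n generalizing a with
  | zero => exact h0 a (cnum_zero hn)
  | succ n ih =>
    obtain ⟨p, b, hp, rfl, hb⟩ := cnum_succ hn
    exact h1 p b hp (ih b hb)

lemma refinement (hF : IsFactorialMonoid F) (x : F) : ∀ y v w : F, x * y = v * w →
    ∃ α β γ δ, x = α * β ∧ y = γ * δ ∧ v = α * γ ∧ w = β * δ := by
  induction x using prime_ind hF with
  | h0 u hu =>
    intro y v w h
    obtain ⟨u, rfl⟩ := hu
    refine ⟨u, 1, ↑u⁻¹ * v, w, by simp, ?_, by simp, by simp⟩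
    rw [mul_assoc, ← h]; simp
  | h1 p x hp ih =>
    intro y v w h
    have hd : p ∣ v * w := ⟨x * y, by rw [← h, mul_assoc]⟩
    rcases hp v w hd with ⟨v', rfl⟩ | ⟨w', rfl⟩
    · obtain ⟨α, β, γ, δ, rfl, rfl, rfl, rfl⟩ := ih y v' w (by
        apply mul_left_cancel (a := p); rw [← mul_assoc, h, mul_assoc])
      exact ⟨p * α, β, γ, δ, by simp [mul_assoc], rfl, by simp [mul_assoc], rfl⟩
    · obtain ⟨α, β, γ, δ, rfl, rfl, rfl, rfl⟩ := ih y v w' (by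
        apply mul_left_cancel (a := p); rw [← mul_assoc, h, mul_left_comm])
      exact ⟨α, p * β, γ, δ, by rw [mul_left_comm], rfl, rfl, by simp [mul_assoc]⟩

variable {H : Submonoid F}

lemma NI.mul (hH : IsConductorSubmonoid H) {a : F} (h : NI H a) (y : F) : NI H (a * y) :=
  hH.2 a h.1 h.2 y

lemma NI.mul_left (hH : IsConductorSubmonoid H) {a : F} (h : NI H a) (y : F) : NI H (y * a) := by
  rw [mul_comm]; exact h.mul hH y

lemma NI.not_unit (hH : IsConductorSubmonoid H) {a : F} (h : NI H a) : ¬ IsUnit a := by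
  rintro ⟨u, rfl⟩
  have := (h.mul hH ↑u⁻¹).2
  rw [Units.mul_inv] at this
  exact this ⟨H.one_mem, 1, H.one_mem, by simp⟩

lemma atom_iff {a : F} : IsAtomIn H a ↔ NI H a ∧ ∀ b c, NI H b → NI H c → a ≠ b * c := by
  constructor
  · rintro ⟨h1, h2, h3⟩
    refine ⟨⟨h1, h2⟩, fun b c hb hc e => ?_⟩
    rcases h3 b c hb.1 hc.1 e with h | h
    · exact hb.2 h
    · exact hc.2 h
  · rintro ⟨h1, h2⟩
    refine ⟨h1.1, h1.2, fun b c hb hc e => ?_⟩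
    by_contra hh
    push Not at hh
    exact h2 b c ⟨hb, hh.1⟩ ⟨hc, hh.2⟩ e

/-- multiset of atoms with given product -/
def Fa (H : Submonoid F) (a : F) (z : Multiset F) : Prop := (∀ u ∈ z, IsAtomIn H u) ∧ z.prod = a

lemma Fa.add {a b : F} {z w : Multiset F} (h : Fa H a z) (h' : Fa H b w) :
    Fa H (a * b) (z + w) := by
  refine ⟨fun u hu => ?_, by simp [h.2, h'.2]⟩
  rcases Multiset.mem_add.1 hu with hu | hu
  · exact h.1 u hu
  · exact h'.1 u hu

lemma Fa.single {a : F} (h : IsAtomIn H a) : Fa H a {a} := by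
  refine ⟨fun u hu => ?_, by simp⟩
  rw [Multiset.mem_singleton.1 hu]; exact h

lemma Fa.cons_inv {a u : F} {z : Multiset F} (h : Fa H a (u ::ₘ z)) :
    IsAtomIn H u ∧ Fa H z.prod z ∧ a = u * z.prod :=
  ⟨h.1 u (by simp), ⟨fun v hv => h.1 v (by simp [hv]), rfl⟩, by rw [← h.2, Multiset.prod_cons]⟩

lemma Fa.ni (hH : IsConductorSubmonoid H) {a : F} {z : Multiset F} (h : Fa H a z) (hz : z ≠ 0) :
    NI H a := by
  obtain ⟨u, hu⟩ := Multiset.exists_mem_of_ne_zero hz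
  obtain ⟨t, rfl⟩ := Multiset.exists_cons_of_mem hu
  obtain ⟨h1, _, rfl⟩ := h.cons_inv
  exact (atom_iff.1 h1).1.mul hH _

lemma Fa.ne_zero (hH : IsConductorSubmonoid H) {a : F} {z : Multiset F} (h : Fa H a z)
    (ha : NI H a) : z ≠ 0 := by
  rintro rfl
  have := h.2
  simp only [Multiset.prod_zero] at this
  subst this
  exact ha.not_unit hH isUnit_one

lemma fa_exists (hF : IsFactorialMonoid F) (hH : IsConductorSubmonoid H) (a : F) (ha : NI H a) :
    ∃ z, Fa H a z := by
  obtain ⟨n, hn⟩ := cnum_exists hF a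
  induction n using Nat.strong_induction_on generalizing a with
  | _ n ih =>
    by_cases hat : IsAtomIn H a
    · exact ⟨_, Fa.single hat⟩
    · rw [atom_iff] at hat
      push Not at hat
      obtain ⟨b, c, hb, hc, e⟩ := hat ha
      obtain ⟨⟨m, hm, h1⟩, ⟨k, hk, h2⟩⟩ := cnum_split hn e (hb.not_unit hH) (hc.not_unit hH)
      obtain ⟨z, hz⟩ := ih m hm b hb h1
      obtain ⟨w, hw⟩ := ih k hk c hc h2
      exact ⟨z + w, e ▸ hz.add hw⟩

lemma split_aux (hH : IsConductorSubmonoid H) {u p s t : F} (hu : IsAtomIn H u) (hp : QP p)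
    (hs : NI H s) (ht : NI H t) (hps : p ∣ s) (e : u * p = s * t) :
    IsAtomIn H s ∧ IsAtomIn H t := by
  have hu2 := (atom_iff.1 hu).2
  refine ⟨atom_iff.2 ⟨hs, ?_⟩, atom_iff.2 ⟨ht, ?_⟩⟩
  · rintro b c hb hc rfl
    rcases hp b c hps with ⟨b', rfl⟩ | ⟨c', rfl⟩
    · refine hu2 (b' * c) t (hc.mul_left hH _) ht (mul_right_cancel (b := p) ?_)
      rw [e]; ac_rfl
    · refine hu2 (b * c') t (hb.mul hH _) ht (mul_right_cancel (b := p) ?_)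
      rw [e]; ac_rfl
  · rintro b c hb hc rfl
    obtain ⟨s', rfl⟩ := hps
    refine hu2 (s' * b) c (hb.mul_left hH _) hc (mul_right_cancel (b := p) ?_)
    rw [e]; ac_rfl

lemma prime_split (hH : IsConductorSubmonoid H) {u p : F} (hu : IsAtomIn H u) (hp : QP p) :
    ∃ z, Fa H (u * p) z ∧ Multiset.card z ≤ 2 := by
  by_cases hat : IsAtomIn H (u * p)
  · exact ⟨_, Fa.single hat, by simp⟩
  · rw [atom_iff] at hat
    push Not at hat
    obtain ⟨s, t, hs, ht, e⟩ := hat ((atom_iff.1 hu).1.mul hH _)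
    have : IsAtomIn H s ∧ IsAtomIn H t := by
      rcases hp s t ⟨u, by rw [← e, mul_comm]⟩ with h | h
      · exact split_aux hH hu hp hs ht h e
      · exact (split_aux hH hu hp ht hs h (by rw [e, mul_comm])).symm
    exact ⟨{s} + {t}, e ▸ (Fa.single this.1).add (Fa.single this.2), by simp⟩

variable [DecidableEq F]

/-- one step -/
def St (H : Submonoid F) (a : F) (z z' : Multiset F) : Prop :=
  Fa H a z ∧ Fa H a z' ∧ factDist z z' ≤ 3

/-- chain -/
def Ch (H : Submonoid F) (a : F) : Multiset F → Multiset F → Prop := Relation.ReflTransGen (St H a)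

lemma Ch.symm {a : F} {z z' : Multiset F} (h : Ch H a z z') : Ch H a z' z := by
  have : Std.Symm (St H a) := ⟨by
    rintro z z' ⟨h1, h2, h3⟩
    exact ⟨h2, h1, by rw [factDist, max_comm]; exact h3⟩⟩
  exact (Relation.ReflTransGen.stdSymm (r := St H a)).symm _ _ h

lemma Ch.add {a b : F} {z z' w : Multiset F} (h : Ch H a z z') (hw : Fa H b w) :
    Ch H (a * b) (z + w) (z' + w) := by
  refine Relation.ReflTransGen.lift (fun z => z + w) ?_ _ _ h
  rintro z z' ⟨h1, h2, h3⟩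
  refine ⟨h1.add hw, h2.add hw, ?_⟩
  simpa [factDist, add_tsub_add_eq_tsub_right] using h3

lemma Ch.small {a : F} {z z' : Multiset F} (h : Fa H a z) (h' : Fa H a z')
    (hc : Multiset.card z ≤ 3) (hc' : Multiset.card z' ≤ 3) : Ch H a z z' := by
  refine Relation.ReflTransGen.single ⟨h, h', ?_⟩
  exact max_le ((Multiset.card_le_card tsub_le_self).trans hc)
    ((Multiset.card_le_card tsub_le_self).trans hc')

def Conn (H : Submonoid F) (a : F) : Prop := ∀ z z', Fa H a z → Fa H a z' → Ch H a z z'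

def Sa (H : Submonoid F) (a x y x' y' : F) : Prop :=
  ∀ X Y X' Y', Fa H x X → Fa H y Y → Fa H x' X' → Fa H y' Y' → Ch H a (X + Y) (X' + Y')

lemma Ch.add2 {x y : F} {X X' Y Y' : Multiset F} (hx : Conn H x) (hy : Conn H y)
    (h1 : Fa H x X) (h2 : Fa H x X') (h3 : Fa H y Y) (h4 : Fa H y Y') :
    Ch H (x * y) (X + Y) (X' + Y') := by
  refine ((hx _ _ h1 h2).add h3).trans ?_
  have := (hy _ _ h3 h4).add h2
  rwa [mul_comm, add_comm, add_comm Y'] at this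

lemma Sa.symm {a x y x' y' : F} (h : Sa H a x y x' y') : Sa H a x' y' x y :=
  fun X Y X' Y' h1 h2 h3 h4 => (h X' Y' X Y h3 h4 h1 h2).symm

lemma Sa.trans (hF : IsFactorialMonoid F) (hH : IsConductorSubmonoid H) {a x y x' y' x'' y'' : F}
    (hx' : NI H x') (hy' : NI H y')
    (h : Sa H a x y x' y') (h' : Sa H a x' y' x'' y'') : Sa H a x y x'' y'' := by
  intro X Y X' Y' h1 h2 h3 h4
  obtain ⟨z, hz⟩ := fa_exists hF hH x' hx'
  obtain ⟨w, hw⟩ := fa_exists hF hH y' hy'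
  exact (h X Y z w h1 h2 hz hw).trans (h' z w X' Y' hz hw h3 h4)

lemma sa_step (hF : IsFactorialMonoid F) (hH : IsConductorSubmonoid H) {a : F}
    (ih : ∀ x y, a = x * y → NI H x → NI H y → Conn H x ∧ Conn H y)
    {x w p : F} (hx : NI H x) (hw : NI H w) (hp : QP p) (e : a = x * (p * w)) :
    Sa H a x (p * w) (x * p) w := by
  intro X Y X' Y' h1 h2 h3 h4
  obtain ⟨x0, hx0⟩ := Multiset.exists_mem_of_ne_zero (h1.ne_zero hH hx)
  obtain ⟨X0, rfl⟩ := Multiset.exists_cons_of_mem hx0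
  obtain ⟨w0, hw0⟩ := Multiset.exists_mem_of_ne_zero (h4.ne_zero hH hw)
  obtain ⟨W0, rfl⟩ := Multiset.exists_cons_of_mem hw0
  obtain ⟨ax, hX0, ex⟩ := h1.cons_inv
  obtain ⟨aw, hW0, ew⟩ := h4.cons_inv
  obtain ⟨A, hA, cA⟩ := prime_split hH ax hp
  obtain ⟨B, hB, cB⟩ := prime_split hH aw hp
  have e' : a = (x * p) * w := by rw [e]; ac_rfl
  obtain ⟨i1, i2⟩ := ih _ _ e hx (hw.mul_left hH _)
  obtain ⟨i3, i4⟩ := ih _ _ e' (hx.mul hH _) hw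
  have f2 : Fa H (p * w) (B + W0) := by
    have := hB.add hW0
    rwa [show w0 * p * W0.prod = p * w by rw [ew]; ac_rfl] at this
  have f3 : Fa H (x * p) (A + X0) := by
    have := hA.add hX0
    rwa [show x0 * p * X0.prod = x * p by rw [ex]; ac_rfl] at this
  have c1 := Ch.add2 i1 i2 h1 h1 h2 f2
  have c3 := Ch.add2 i3 i4 f3 h3 h4 h4
  rw [← e] at c1
  rw [← e'] at c3
  refine (c1.trans ?_).trans c3
  have g1 : Fa H (x0 * (w0 * p)) ({x0} + B) := (Fa.single ax).add hB
  have g2 : Fa H (x0 * (w0 * p)) (A + {w0}) := by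
    have := hA.add (Fa.single aw)
    rwa [show x0 * p * w0 = x0 * (w0 * p) by ac_rfl] at this
  have c := (Ch.small g1 g2 (by simp; omega) (by simp; omega)).add (hX0.add hW0)
  rw [show x0 * (w0 * p) * (X0.prod * W0.prod) = a by rw [e, ex, ew]; ac_rfl,
    show {x0} + B + (X0 + W0) = x0 ::ₘ X0 + (B + W0) by
      rw [← Multiset.singleton_add]; ac_rfl,
    show A + {w0} + (X0 + W0) = A + X0 + w0 ::ₘ W0 by
      rw [← Multiset.singleton_add]; ac_rfl] at c
  exact c

lemma sa_chunk (hF : IsFactorialMonoid F) (hH : IsConductorSubmonoid H) {a : F}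
    (ih : ∀ x y, a = x * y → NI H x → NI H y → Conn H x ∧ Conn H y) (c : F) :
    ∀ {x w : F}, NI H x → NI H w → a = x * (c * w) → Sa H a x (c * w) (x * c) w := by
  induction c using prime_ind hF with
  | h0 u hu => intro x w hx hw e; exact sa_step hF hH ih hx hw (qp_unit hu) e
  | h1 p c hp ihc =>
    intro x w hx hw e
    have s1 := sa_step hF hH ih (p := p) hx (hw.mul_left hH c) hp (by rw [e]; ac_rfl)
    have s2 := ihc (hx.mul hH p) hw (by rw [e]; ac_rfl)
    have := s1.trans hF hH (hx.mul hH p) (hw.mul_left hH c) s2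
    rwa [← mul_assoc, mul_assoc x] at this

/-- the class of `(x, y)` contains a factorization of length two -/
def Two (H : Submonoid F) (a x y : F) : Prop :=
  ∃ s t, IsAtomIn H s ∧ IsAtomIn H t ∧ a = s * t ∧ Sa H a x y s t

lemma atom_of_prime (hH : IsConductorSubmonoid H) {p y : F} (hp : QP p) (h : NI H (p * y))
    (h' : ¬ NI H y) : IsAtomIn H (p * y) := by
  refine atom_iff.2 ⟨h, fun b c hb hc e => h' ?_⟩
  rcases hp b c ⟨y, e.symm⟩ with ⟨b', rfl⟩ | ⟨c', rfl⟩
  · rw [mul_left_cancel (a := p) (b := y) (c := b' * c) (by rw [e]; ac_rfl)]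
    exact hc.mul_left hH _
  · rw [mul_left_cancel (a := p) (b := y) (c := b * c') (by rw [e]; ac_rfl)]
    exact hb.mul hH _

lemma walk (hF : IsFactorialMonoid F) (hH : IsConductorSubmonoid H) {a : F}
    (ih : ∀ x y, a = x * y → NI H x → NI H y → Conn H x ∧ Conn H y) (n : ℕ) :
    ∀ α β γ δ i j, CNum β i → CNum γ j → i + j ≤ n → NI H (α * β) → NI H (γ * δ) →
      NI H (α * γ) → NI H (β * δ) → a = (α * β) * (γ * δ) →
      Sa H a (α * β) (γ * δ) (α * γ) (β * δ) ∨ Two H a (α * β) (γ * δ) := by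
  induction n with
  | zero =>
    intro α β γ δ i j hi hj hn h1 h2 h3 h4 e
    obtain rfl : i = 0 := by omega
    obtain ⟨u, rfl⟩ := cnum_zero hi
    have hα : NI H α := by
      have := h1.mul hH (↑u⁻¹ : F)
      rwa [mul_assoc, Units.mul_inv, mul_one] at this
    left
    have s1 := sa_chunk hF hH ih (↑u : F) hα h2 (by rw [e]; ac_rfl)
    have s2 := sa_chunk hF hH ih γ hα h4 (by rw [e]; ac_rfl)
    rw [show γ * (↑u * δ) = ↑u * (γ * δ) by ac_rfl] at s2
    exact s1.symm.trans hF hH hα (h2.mul_left hH _) s2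
  | succ n ihn =>
    intro α β γ δ i j hi hj hn h1 h2 h3 h4 e
    by_cases hα : NI H α
    · left
      have s1 := sa_chunk hF hH ih β hα h2 (by rw [e]; ac_rfl)
      have s2 := sa_chunk hF hH ih γ hα h4 (by rw [e]; ac_rfl)
      rw [show γ * (β * δ) = β * (γ * δ) by ac_rfl] at s2
      exact s1.symm.trans hF hH hα (h2.mul_left hH _) s2
    by_cases hδ : NI H δ
    · left
      have s1 := sa_chunk hF hH ih γ h1 hδ (by rw [e])
      have s2 := sa_chunk hF hH ih β h3 hδ (by rw [e]; ac_rfl)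
      rw [show α * γ * β = α * β * γ by ac_rfl] at s2
      exact s1.trans hF hH (h1.mul hH _) hδ s2.symm
    rcases i with _ | i
    · obtain ⟨u, rfl⟩ := cnum_zero hi
      refine absurd ?_ hα
      have := h1.mul hH (↑u⁻¹ : F)
      rwa [mul_assoc, Units.mul_inv, mul_one] at this
    rcases j with _ | j
    · obtain ⟨u, rfl⟩ := cnum_zero hj
      refine absurd ?_ hδ
      have := h2.mul_left hH (↑u⁻¹ : F)
      rwa [← mul_assoc, Units.inv_mul, one_mul] at this
    obtain ⟨q, β', hq, rfl, hβ'⟩ := cnum_succ hi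
    obtain ⟨p, γ', hp, rfl, hγ'⟩ := cnum_succ hj
    by_cases hy : NI H (γ' * δ)
    · have s1 := sa_step hF hH ih (p := p) h1 hy hp (by rw [e]; ac_rfl)
      have hx' : NI H (α * p * (q * β')) := by
        have := h1.mul hH p
        rwa [show α * (q * β') * p = α * p * (q * β') by ac_rfl] at this
      have := ihn (α * p) (q * β') γ' δ _ _ hi hγ' (by omega) hx' hy
        (by rwa [mul_assoc]) h4 (by rw [e]; ac_rfl)
      rw [show α * (q * β') * p = α * p * (q * β') by ac_rfl, ← mul_assoc p] at s1
      rcases this with h | ⟨s, t, hs, ht, est, h⟩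
      · left
        have := s1.trans hF hH hx' hy h
        rwa [mul_assoc α p] at this
      · right
        exact ⟨s, t, hs, ht, est, s1.trans hF hH hx' hy h⟩
    by_cases hx : NI H (α * β')
    · have hy' : NI H (p * γ' * (q * δ)) := by
        have := h2.mul hH q
        rwa [show p * γ' * δ * q = p * γ' * (q * δ) by ac_rfl] at this
      have s1 := sa_step hF hH ih (p := q) hx h2 hq (by rw [e]; ac_rfl)
      have := ihn α β' (p * γ') (q * δ) _ _ hβ' hj (by omega) hx hy' h3
        (by rwa [show β' * (q * δ) = q * β' * δ by ac_rfl]) (by rw [e]; ac_rfl)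
      rw [show α * β' * q = α * (q * β') by ac_rfl,
        show q * (p * γ' * δ) = p * γ' * (q * δ) by ac_rfl] at s1
      rcases this with h | ⟨s, t, hs, ht, est, h⟩
      · left
        have := s1.symm.trans hF hH hx hy' h
        rwa [show β' * (q * δ) = q * β' * δ by ac_rfl] at this
      · right
        exact ⟨s, t, hs, ht, est, s1.symm.trans hF hH hx hy' h⟩
    right
    refine ⟨α * (q * β'), p * γ' * δ, ?_, ?_, e, ?_⟩
    · rw [mul_left_comm] at h1 ⊢
      exact atom_of_prime hH hq h1 hx
    · rw [mul_assoc] at h2 ⊢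
      exact atom_of_prime hH hp h2 hy
    · intro X Y X' Y' f1 f2 f3 f4
      obtain ⟨i1, i2⟩ := ih _ _ e h1 h2
      have := Ch.add2 i1 i2 f1 f3 f2 f4
      rwa [← e] at this

lemma walk' (hF : IsFactorialMonoid F) (hH : IsConductorSubmonoid H) {a : F}
    (ih : ∀ x y, a = x * y → NI H x → NI H y → Conn H x ∧ Conn H y) {x y v w : F}
    (hx : NI H x) (hy : NI H y) (hv : NI H v) (hw : NI H w) (e : a = x * y) (e' : a = v * w) :
    Sa H a x y v w ∨ Two H a x y := by
  obtain ⟨α, β, γ, δ, rfl, rfl, rfl, rfl⟩ := refinement hF x y v w (by rw [← e, e'])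
  obtain ⟨i, hi⟩ := cnum_exists hF β
  obtain ⟨j, hj⟩ := cnum_exists hF γ
  exact walk hF hH ih (i + j) α β γ δ i j hi hj le_rfl hx hy hv hw e

lemma conn_all (hF : IsFactorialMonoid F) (hH : IsConductorSubmonoid H) (a : F) : Conn H a := by
  obtain ⟨n, hn⟩ := cnum_exists hF a
  induction n using Nat.strong_induction_on generalizing a with
  | _ n ihn =>
    have ih : ∀ x y, a = x * y → NI H x → NI H y → Conn H x ∧ Conn H y := by
      intro x y e hx hy
      obtain ⟨⟨m, hm, h1⟩, ⟨k, hk, h2⟩⟩ := cnum_split hn e (hx.not_unit hH) (hy.not_unit hH)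
      exact ⟨ihn m hm x h1, ihn k hk y h2⟩
    intro z z' hz hz'
    by_cases z0 : z = 0
    · by_cases z0' : z' = 0
      · subst z0 z0'; exact Relation.ReflTransGen.refl
      · exact absurd z0 (hz.ne_zero hH (hz'.ni hH z0'))
    have z0' : z' ≠ 0 := hz'.ne_zero hH (hz.ni hH z0)
    by_cases hat : IsAtomIn H a
    · have key : ∀ z, Fa H a z → z ≠ 0 → Multiset.card z ≤ 3 := by
        intro z hz z0
        obtain ⟨u, hu⟩ := Multiset.exists_mem_of_ne_zero z0
        obtain ⟨t, rfl⟩ := Multiset.exists_cons_of_mem hu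
        obtain ⟨h1, h2, h3⟩ := hz.cons_inv
        by_cases t0 : t = 0
        · subst t0; simp
        · exact absurd h3 ((atom_iff.1 hat).2 _ _ (atom_iff.1 h1).1 (h2.ni hH t0))
      exact Ch.small hz hz' (key z hz z0) (key z' hz' z0')
    have dec : ∀ z, Fa H a z → z ≠ 0 → ∃ x y X Y, NI H x ∧ NI H y ∧ a = x * y ∧ Fa H x X ∧
        Fa H y Y ∧ z = X + Y := by
      intro z hz z0
      obtain ⟨u, hu⟩ := Multiset.exists_mem_of_ne_zero z0
      obtain ⟨t, rfl⟩ := Multiset.exists_cons_of_mem hu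
      obtain ⟨h1, h2, h3⟩ := hz.cons_inv
      by_cases t0 : t = 0
      · subst t0
        simp only [Multiset.prod_zero, mul_one] at h3
        exact absurd (h3 ▸ h1) hat
      · exact ⟨u, t.prod, {u}, t, (atom_iff.1 h1).1, h2.ni hH t0, h3, Fa.single h1, h2, by simp⟩
    obtain ⟨x, y, X, Y, hx, hy, e, fX, fY, rfl⟩ := dec z hz z0
    obtain ⟨v, w, V, W, hv, hw, e', fV, fW, rfl⟩ := dec z' hz' z0'
    rcases walk' hF hH ih hx hy hv hw e e' with h | ⟨s, t, hs, ht, est, h⟩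
    · exact h _ _ _ _ fX fY fV fW
    rcases walk' hF hH ih hv hw hx hy e' e with h' | ⟨s', t', hs', ht', est', h'⟩
    · exact (h' _ _ _ _ fV fW fX fY).symm
    have c1 := h _ _ _ _ fX fY (Fa.single hs) (Fa.single ht)
    have c2 := h' _ _ _ _ fV fW (Fa.single hs') (Fa.single ht')
    have g1 := (Fa.single hs).add (Fa.single ht)
    have g2 := (Fa.single hs').add (Fa.single ht')
    rw [← est] at g1
    rw [← est'] at g2
    exact (c1.trans (Ch.small g1 g2 (by simp) (by simp))).trans c2.symm

lemma dist_lower (hH : IsConductorSubmonoid H) {a : F} {z z' : Multiset F} (hz : Fa H a z)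
    (hz' : Fa H a z') (hlt : Multiset.card z < Multiset.card z') :
    2 ≤ Multiset.card (z - z') ∧ 3 ≤ Multiset.card (z' - z) ∧
    Multiset.card z + Multiset.card (z' - z) = Multiset.card z' + Multiset.card (z - z') := by
  have e1 : z - z' + z ∩ z' = z := Multiset.sub_add_inter z z'
  have e2 : z' - z + z ∩ z' = z' := by rw [Multiset.inter_comm]; exact Multiset.sub_add_inter z' z
  have c1 := congrArg Multiset.card e1
  have c2 := congrArg Multiset.card e2
  have p1 := congrArg Multiset.prod e1
  have p2 := congrArg Multiset.prod e2
  rw [Multiset.card_add] at c1 c2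
  rw [Multiset.prod_add] at p1 p2
  have pe : (z - z').prod = (z' - z).prod := by
    apply mul_right_cancel (b := (z ∩ z').prod)
    rw [p1, p2, hz.2, hz'.2]
  have f1 : Fa H (z - z').prod (z - z') :=
    ⟨fun u hu => hz.1 u (Multiset.mem_of_le tsub_le_self hu), rfl⟩
  have f2 : Fa H (z - z').prod (z' - z) :=
    ⟨fun u hu => hz'.1 u (Multiset.mem_of_le tsub_le_self hu), pe.symm⟩
  have hne : z' - z ≠ 0 := by
    intro h; rw [h, Multiset.card_zero] at c2; omega
  have hne' : z - z' ≠ 0 := f1.ne_zero hH (f2.ni hH hne)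
  have hpos : 0 < Multiset.card (z - z') := Multiset.card_pos.2 hne'
  have : Multiset.card (z - z') ≠ 1 := by
    intro h
    obtain ⟨u, hu⟩ := Multiset.card_eq_one.1 h
    have hat : IsAtomIn H u := f1.1 u (by simp [hu])
    obtain ⟨w, hw⟩ := Multiset.exists_mem_of_ne_zero hne
    obtain ⟨t, ht⟩ := Multiset.exists_cons_of_mem hw
    rw [ht, hu] at f2
    obtain ⟨h1, h2, h3⟩ := f2.cons_inv
    rw [Multiset.prod_singleton] at h3
    have t0 : t ≠ 0 := by
      rintro rfl
      rw [ht] at c2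
      simp at c2
      omega
    exact (atom_iff.1 hat).2 _ _ (atom_iff.1 h1).1 (h2.ni hH t0) h3
  omega

lemma crossing (k l : ℕ) {a : F} {z z' : Multiset F} (h : Ch H a z z')
    (hz : Multiset.card z ≤ k) (hz' : l ≤ Multiset.card z') (hkl : k < l)
    (hno : ∀ w, Fa H a w → ¬ (k < Multiset.card w ∧ Multiset.card w < l)) :
    ∃ w w', St H a w w' ∧ Multiset.card w ≤ k ∧ l ≤ Multiset.card w' := by
  induction h with
  | refl => omega
  | @tail b c hb hbc ih =>
    by_cases hl : l ≤ Multiset.card b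
    · exact ih hl
    · have := hno b hbc.1
      exact ⟨b, c, hbc, by omega, hz'⟩

end CondHelpers

/-- if `H` is a conductor submonoid of a factorial monoid `F` and `H` is not
half-factorial, then the adjacent catenary degree of `H` equals `3`: there exists an
adjacent pair of lengths, and for every `a ∈ H` and every adjacent pair `k < ℓ` of lengths
of `a`, the distance `d(Z_k(a), Z_ℓ(a))` equals `3`. -/
theorem stmt_15 {F : Type*} [CancelCommMonoid F] [DecidableEq F]
    (hF : IsFactorialMonoid F) (H : Submonoid F) (hH : IsConductorSubmonoid H)
    (hhf : ∃ a : F, ∃ m ∈ LengthSetOf H a, ∃ n ∈ LengthSetOf H a, m ≠ n) :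
    (∃ a : F, ∃ k ∈ LengthSetOf H a, ∃ l ∈ LengthSetOf H a,
      k < l ∧ ¬ ∃ j ∈ LengthSetOf H a, k < j ∧ j < l) ∧
    (∀ a : F, ∀ k ∈ LengthSetOf H a, ∀ l ∈ LengthSetOf H a,
      k < l → (¬ ∃ j ∈ LengthSetOf H a, k < j ∧ j < l) →
      (∃ z ∈ FactorizationsOf H a, ∃ z' ∈ FactorizationsOf H a,
        Multiset.card z = k ∧ Multiset.card z' = l ∧ factDist z z' ≤ 3) ∧
      (∀ z ∈ FactorizationsOf H a, ∀ z' ∈ FactorizationsOf H a,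
        Multiset.card z = k → Multiset.card z' = l → 3 ≤ factDist z z')) := by
  constructor
  · obtain ⟨a, m, hm, n, hn, hmn⟩ := hhf
    have key : ∀ d k l : ℕ, k ∈ LengthSetOf H a → l ∈ LengthSetOf H a → k < l → l ≤ k + d →
        ∃ k ∈ LengthSetOf H a, ∃ l ∈ LengthSetOf H a,
          k < l ∧ ¬ ∃ j ∈ LengthSetOf H a, k < j ∧ j < l := by
      intro d
      induction d with
      | zero => intro k l _ _ h1 h2; omega
      | succ d ih =>
        intro k l hk hl h1 h2
        by_cases hj : ∃ j ∈ LengthSetOf H a, k < j ∧ j < l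
        · obtain ⟨j, hj, h3, h4⟩ := hj
          exact ih k j hk hj h3 (by omega)
        · exact ⟨k, hk, l, hl, h1, hj⟩
    refine ⟨a, ?_⟩
    rcases lt_or_gt_of_ne hmn with h | h
    · exact key n m n hm hn h (by omega)
    · exact key m n m hn hm h (by omega)
  · intro a k hk l hl hkl hno
    refine ⟨?_, ?_⟩
    · obtain ⟨z, hz, rfl⟩ := hk
      obtain ⟨z', hz', rfl⟩ := hl
      obtain ⟨w, w', ⟨h1, h2, h3⟩, h4, h5⟩ := crossing _ _ (conn_all hF hH a z z' hz hz')
        le_rfl le_rfl hkl (fun w hw hh => hno ⟨_, ⟨w, hw, rfl⟩, hh⟩)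
      obtain ⟨g1, g2, g3⟩ := dist_lower hH h1 h2 (by omega)
      have g4 : Multiset.card (w' - w) ≤ 3 := (le_max_right _ _).trans h3
      exact ⟨w, h1, w', h2, by omega, by omega, h3⟩
    · rintro z hz z' hz' rfl rfl
      exact (dist_lower hH hz hz' hkl).2.1.trans (le_max_right _ _)
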